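/- Let C be a group system, t ∈ ℤ, and k ≥ 0. For j ≥ 0 define F^j(Δ_k^t) = {β^{t+j}(a) : a ∈ C, β^t(a) ∈ Δ_k^t}. Then F^j(Δ_k^t) = X_{j−1}^{t+j}·(X_j^{t+j} ∩ Y_{k−j}^{t+j}) for 0 ≤ j ≤ k, and F^j(Δ_k^t) = X_{j−1}^{t+j} for j > k. -/

import Mathlib

/-!
The kernel of `β^t` is `C^{t−}C^{(t+1)+}`. If `i, j ≥ -1`, its first factor lies in `C^{(t+i+1)−}`
and its second in `C^{(t−j)+}`, so `β^t` commutes with the intersection of these two groups: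
`X_j^t ∩ Y_i^t = β^t(C^{[t−j,t+i]})`. In particular the codewords whose branch at time `t` lies in
`Δ_k^t` form `D_k^t = C^{[t,t+k]}C^{t−}C^{(t+1)+}`. Applying `β^{t+j}` kills `C^{t−}`, turns
`C^{(t+1)+}` into `X_{j−1}^{t+j}`, and sends `C^{[t,t+k]}` to `X_j^{t+j} ∩ Y_{k−j}^{t+j}` if `j ≤ k`
and to the trivial group if `j > k`.
-/

open scoped Pointwise

namespace GroupSystemPaper

variable {A : ℤ → Type*} [∀ t, Group (A t)]

/-- `C^{t+}` : codewords of the group system `C` that are the identity before time `t`. -/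
def Cplus (C : Subgroup (∀ t, A t)) (t : ℤ) : Subgroup C where
  carrier := {a | ∀ n < t, (a : ∀ s, A s) n = 1}
  one_mem' := by intro n hn; simp
  mul_mem' := by intro a b ha hb n hn; simp [ha n hn, hb n hn]
  inv_mem' := by intro a ha n hn; simp [ha n hn]

/-- `C^{t−}` : codewords of the group system `C` that are the identity from time `t` on. -/
def Cminus (C : Subgroup (∀ t, A t)) (t : ℤ) : Subgroup C where
  carrier := {a | ∀ n, t ≤ n → (a : ∀ s, A s) n = 1}
  one_mem' := by intro n hn; simp
  mul_mem' := by intro a b ha hb n hn; simp [ha n hn, hb n hn]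
  inv_mem' := by intro a ha n hn; simp [ha n hn]

/-- `C^{[t₁,t₂]}` : codewords supported on the interval `[t₁, t₂]`. -/
def Cint (C : Subgroup (∀ t, A t)) (t₁ t₂ : ℤ) : Subgroup C :=
  Cplus C t₁ ⊓ Cminus C (t₂ + 1)

instance Cplus_normal (C : Subgroup (∀ t, A t)) (t : ℤ) : (Cplus C t).Normal := by
  constructor
  intro x hx g n hn
  have h1 : (x : ∀ s, A s) n = 1 := hx n hn
  simp [h1]

instance Cminus_normal (C : Subgroup (∀ t, A t)) (t : ℤ) : (Cminus C t).Normal := by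
  constructor
  intro x hx g n hn
  have h1 : (x : ∀ s, A s) n = 1 := hx n hn
  simp [h1]

instance Cint_normal (C : Subgroup (∀ t, A t)) (t₁ t₂ : ℤ) : (Cint C t₁ t₂).Normal := by
  constructor
  intro x hx g
  rcases Subgroup.mem_inf.mp hx with ⟨h1, h2⟩
  exact Subgroup.mem_inf.mpr
    ⟨(Cplus_normal C t₁).conj_mem _ h1 g, (Cminus_normal C (t₂ + 1)).conj_mem _ h2 g⟩

/-- The normal subgroup `C^{t−}C^{t+}` of `C`. -/
def stateN (C : Subgroup (∀ t, A t)) (t : ℤ) : Subgroup C :=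
  Cminus C t ⊔ Cplus C t

instance stateN_normal (C : Subgroup (∀ t, A t)) (t : ℤ) : (stateN C t).Normal :=
  Subgroup.sup_normal _ _

/-- The canonical state space `Σ^t = C/(C^{t−}C^{t+})`. -/
abbrev State (C : Subgroup (∀ t, A t)) (t : ℤ) : Type _ :=
  ↥C ⧸ stateN C t

/-- The state projection `σ^t : C → Σ^t`. -/
def sigma (C : Subgroup (∀ t, A t)) (t : ℤ) : ↥C →* State C t :=
  QuotientGroup.mk' (stateN C t)

/-- The evaluation homomorphism `χ^t : C → A^t`. -/
def evalHom (C : Subgroup (∀ t, A t)) (t : ℤ) : ↥C →* A t :=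
  (Pi.evalMonoidHom A t).comp C.subtype

/-- The branch homomorphism `β^t : C → Σ^t × A^t × Σ^{t+1}`. -/
def beta (C : Subgroup (∀ t, A t)) (t : ℤ) :
    ↥C →* State C t × A t × State C (t + 1) :=
  (sigma C t).prod ((evalHom C t).prod (sigma C (t + 1)))

/-- The branch group `B^t = β^t(C)`. -/
def Branch (C : Subgroup (∀ t, A t)) (t : ℤ) :
    Subgroup (State C t × A t × State C (t + 1)) :=
  (beta C t).range

/-- `β^t` with codomain restricted to the branch group `B^t`. -/
def betaRes (C : Subgroup (∀ t, A t)) (t : ℤ) : ↥C →* ↥(Branch C t) :=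
  (beta C t).rangeRestrict

/-- `X_j^t = β^t(C^{(t−j)+})` as a subgroup of the branch group `B^t`. -/
def X (C : Subgroup (∀ t, A t)) (j t : ℤ) : Subgroup ↥(Branch C t) :=
  (Cplus C (t - j)).map (betaRes C t)

/-- `Y_i^t = β^t(C^{(t+i+1)−})` as a subgroup of the branch group `B^t`. -/
def Y (C : Subgroup (∀ t, A t)) (i t : ℤ) : Subgroup ↥(Branch C t) :=
  (Cminus C (t + i + 1)).map (betaRes C t)

instance X_normal (C : Subgroup (∀ t, A t)) (j t : ℤ) : (X C j t).Normal :=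
  (Cplus_normal C (t - j)).map _ (MonoidHom.rangeRestrict_surjective _)

instance Y_normal (C : Subgroup (∀ t, A t)) (i t : ℤ) : (Y C i t).Normal :=
  (Cminus_normal C (t + i + 1)).map _ (MonoidHom.rangeRestrict_surjective _)

/-- `Δ_k^t = X_0^t ∩ Y_k^t`. -/
def Del (C : Subgroup (∀ t, A t)) (k t : ℤ) : Subgroup ↥(Branch C t) :=
  X C 0 t ⊓ Y C k t

/-- `D_k^t = {a ∈ C : β^t(a) ∈ Δ_k^t}`. -/
def D (C : Subgroup (∀ t, A t)) (k t : ℤ) : Subgroup ↥C :=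
  (Del C k t).comap (betaRes C t)

/-- Following-branch operator: for `S ⊆ B^{t₁}`,
`FSet C t₁ t₂ S = {β^{t₂}(a) : a ∈ C, β^{t₁}(a) ∈ S}`. -/
def FSet (C : Subgroup (∀ t, A t)) (t₁ t₂ : ℤ) (S : Set ↥(Branch C t₁)) :
    Set ↥(Branch C t₂) :=
  {x | ∃ a : ↥C, betaRes C t₁ a ∈ S ∧ betaRes C t₂ a = x}

/-- `π^{[t,t+k]} : C → B^t × ⋯ × B^{t+k}`, `a ↦ (β^t(a), …, β^{t+k}(a))`. -/
def piSeg (C : Subgroup (∀ t, A t)) (t : ℤ) (k : ℕ) :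
    ↥C →* ∀ j : Fin (k + 1), ↥(Branch C (t + ((j : ℕ) : ℤ))) where
  toFun a := fun j => betaRes C (t + ((j : ℕ) : ℤ)) a
  map_one' := by funext j; simp
  map_mul' a b := by funext j; simp

/-- `π^{[t,t+k]}(D_m^t)`. -/
def Pseg (C : Subgroup (∀ t, A t)) (t : ℤ) (k : ℕ) (m : ℤ) :
    Subgroup (∀ j : Fin (k + 1), ↥(Branch C (t + ((j : ℕ) : ℤ)))) :=
  (D C m t).map (piSeg C t k)

/-- `β^{t+j}(D_m^t)` : the image of `D_m^t` in the branch group at time `t + j`. -/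
def Qb (C : Subgroup (∀ t, A t)) (t m j : ℤ) : Subgroup ↥(Branch C (t + j)) :=
  (D C m t).map (betaRes C (t + j))

/-- The normal subgroup `C^{[t,t+k−1]}C^{[t+1,t+k]}` of `C` (denominator of the granule). -/
def granN (C : Subgroup (∀ t, A t)) (t : ℤ) (k : ℕ) : Subgroup ↥C :=
  Cint C t (t + k - 1) ⊔ Cint C (t + 1) (t + k)

instance granN_normal (C : Subgroup (∀ t, A t)) (t : ℤ) (k : ℕ) : (granN C t k).Normal :=
  Subgroup.sup_normal _ _

lemma mem_D_of_mem_Cint (C : Subgroup (∀ t, A t)) (t : ℤ) (k : ℕ) {a : ↥C}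
    (ha : a ∈ Cint C t (t + k)) : a ∈ D C (k : ℤ) t := by
  rcases Subgroup.mem_inf.mp ha with ⟨h1, h2⟩
  refine Subgroup.mem_comap.mpr (Subgroup.mem_inf.mpr ⟨?_, ?_⟩)
  · exact Subgroup.mem_map.mpr ⟨a, by simpa using h1, rfl⟩
  · exact Subgroup.mem_map.mpr ⟨a, h2, rfl⟩

/-- `ℓ`-controllability of the group system `C`. -/
def Controllable (C : Subgroup (∀ t, A t)) (ℓ : ℕ) : Prop :=
  ∀ a b : ↥C, ∀ t : ℤ, ∃ c : ↥C,
    (∀ n < t, (c : ∀ s, A s) n = (a : ∀ s, A s) n) ∧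
    (∀ n, t + (ℓ : ℤ) ≤ n → (c : ∀ s, A s) n = (b : ∀ s, A s) n)

theorem map_inf_eq_of_ker_eq_sup {G G' : Type*} [Group G] [Group G'] (f : G →* G')
    {H K M P : Subgroup G} [M.Normal] (hker : f.ker = M ⊔ P) (hM : M ≤ K) (hP : P ≤ H) :
    (H ⊓ K).map f = H.map f ⊓ K.map f := by
  refine le_antisymm (Subgroup.map_inf_le H K f) ?_
  rintro _ ⟨⟨x, hx, rfl⟩, y, hy, hyx⟩
  have hmem : y⁻¹ * x ∈ M ⊔ P := by
    rw [← hker, ← f.eq_iff, hyx]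
  obtain ⟨m, hm, p, hp, hmp⟩ := Subgroup.mem_sup_of_normal_left.mp hmem
  have hymx : y * m = x * p⁻¹ := by
    rw [eq_mul_inv_iff_mul_eq, mul_assoc, hmp, mul_inv_cancel_left]
  have hfm : f m = 1 := by
    rw [← f.mem_ker, hker]
    exact Subgroup.mem_sup_left hm
  refine ⟨y * m, ⟨?_, mul_mem hy (hM hm)⟩, by rw [map_mul, hfm, mul_one, hyx]⟩
  rw [hymx]
  exact H.mul_mem hx (H.inv_mem (hP hp))

section

variable (C : Subgroup (∀ t, A t))

theorem Cplus_antitone : Antitone (Cplus C) :=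
  fun _ _ hst _ ha n hn => ha n (hn.trans_le hst)

theorem Cminus_monotone : Monotone (Cminus C) :=
  fun _ _ hst _ ha n hn => ha n (hst.trans hn)

theorem ker_sigma (t : ℤ) : (sigma C t).ker = Cminus C t ⊔ Cplus C t :=
  QuotientGroup.ker_mk' _

theorem ker_betaRes_eq_inf (t : ℤ) :
    (betaRes C t).ker = (sigma C t).ker ⊓ ((evalHom C t).ker ⊓ (sigma C (t + 1)).ker) := by
  rw [show (betaRes C t).ker = (beta C t).ker from MonoidHom.ker_rangeRestrict _, beta,
    MonoidHom.ker_prod, MonoidHom.ker_prod]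

theorem Cplus_inf_ker_evalHom (t : ℤ) : Cplus C t ⊓ (evalHom C t).ker = Cplus C (t + 1) := by
  refine le_antisymm ?_ (le_inf (Cplus_antitone C (by omega)) fun _ ha => ha t (by omega))
  rintro a ⟨ha, hat⟩ n hn
  rcases (Int.lt_add_one_iff.mp hn).lt_or_eq with hnt | rfl
  · exact ha n hnt
  · exact hat

theorem Cminus_le_ker_evalHom (t : ℤ) : Cminus C t ≤ (evalHom C t).ker :=
  fun _ ha => ha t le_rfl

theorem ker_betaRes (t : ℤ) : (betaRes C t).ker = Cminus C t ⊔ Cplus C (t + 1) := by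
  rw [ker_betaRes_eq_inf, ker_sigma, ker_sigma]
  apply le_antisymm
  · rintro _ ⟨hσ, hχ, -⟩
    obtain ⟨m, hm, p, hp, rfl⟩ := Subgroup.mem_sup_of_normal_left.mp hσ
    have hpt : p ∈ (evalHom C t).ker :=
      (mul_mem_cancel_left (Cminus_le_ker_evalHom C t hm)).mp hχ
    exact Subgroup.mul_mem_sup hm (Cplus_inf_ker_evalHom C t ▸ ⟨hp, hpt⟩)
  · have hplus := (Cplus_inf_ker_evalHom C t).ge
    have hminus := Cminus_monotone C (by omega : t ≤ t + 1)
    exact le_inf (sup_le_sup_left (hplus.trans inf_le_left) _)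
      (le_inf (sup_le (Cminus_le_ker_evalHom C t) (hplus.trans inf_le_right))
        (sup_le_sup_right hminus _))

theorem map_betaRes_Cminus_eq_bot {s t : ℤ} (hst : s ≤ t) : (Cminus C s).map (betaRes C t) = ⊥ := by
  rw [Subgroup.map_eq_bot_iff, ker_betaRes]
  exact (Cminus_monotone C hst).trans le_sup_left

theorem X_inf_Y {i j : ℤ} (hi : -1 ≤ i) (hj : -1 ≤ j) (t : ℤ) :
    X C j t ⊓ Y C i t = (Cint C (t - j) (t + i)).map (betaRes C t) :=
  (map_inf_eq_of_ker_eq_sup (betaRes C t) (ker_betaRes C t)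
    (Cminus_monotone C (by omega)) (Cplus_antitone C (by omega))).symm

theorem D_eq_sup {k : ℤ} (hk : -1 ≤ k) (t : ℤ) :
    D C k t = Cint C t (t + k) ⊔ (Cminus C t ⊔ Cplus C (t + 1)) := by
  rw [D, Del, X_inf_Y C hk (by omega), Subgroup.comap_map_eq, ker_betaRes, sub_zero]

theorem Qb_eq_sup_map_Cint {j k : ℤ} (hj : 0 ≤ j) (hk : -1 ≤ k) (t : ℤ) :
    Qb C t k j = X C (j - 1) (t + j) ⊔ (Cint C t (t + k)).map (betaRes C (t + j)) := by
  rw [Qb, D_eq_sup C hk, Subgroup.map_sup, Subgroup.map_sup,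
    map_betaRes_Cminus_eq_bot C (by omega), bot_sup_eq, sup_comm, X,
    show t + j - (j - 1) = t + 1 by ring]

theorem Qb_eq_X_sup_X_inf_Y {j k : ℤ} (hj : 0 ≤ j) (hjk : j ≤ k + 1) (t : ℤ) :
    Qb C t k j = X C (j - 1) (t + j) ⊔ (X C j (t + j) ⊓ Y C (k - j) (t + j)) := by
  rw [Qb_eq_sup_map_Cint C hj (by omega), X_inf_Y C (by omega) (by omega), add_sub_cancel_right,
    show t + j + (k - j) = t + k by ring]

theorem Qb_eq_X {j k : ℤ} (hk : -1 ≤ k) (hkj : k < j) (t : ℤ) :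
    Qb C t k j = X C (j - 1) (t + j) := by
  have hCint : (Cint C t (t + k)).map (betaRes C (t + j)) = ⊥ :=
    le_bot_iff.mp <| (Subgroup.map_mono inf_le_right).trans_eq <|
      map_betaRes_Cminus_eq_bot C (by omega)
  rw [Qb_eq_sup_map_Cint C (by omega) hk, hCint, sup_bot_eq]

theorem FSet_Del (t k j : ℤ) :
    FSet C t (t + j) (Del C k t : Set ↥(Branch C t)) = (Qb C t k j : Set ↥(Branch C (t + j))) :=
  rfl

end

/-- With `F^j(Δ_k^t) = {β^{t+j}(a) : a ∈ C, β^t(a) ∈ Δ_k^t}`, we have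
`F^j(Δ_k^t) = X_{j−1}^{t+j}·(X_j^{t+j} ∩ Y_{k−j}^{t+j})` for `0 ≤ j ≤ k`, and
`F^j(Δ_k^t) = X_{j−1}^{t+j}` for `j > k`. -/
theorem statement11 (C : Subgroup (∀ t, A t)) (t : ℤ) (k : ℕ) :
    (∀ j : ℕ, j ≤ k →
      FSet C t (t + (j : ℤ)) (Del C (k : ℤ) t : Set ↥(Branch C t)) =
        (X C ((j : ℤ) - 1) (t + (j : ℤ)) : Set ↥(Branch C (t + (j : ℤ)))) *
          ((X C (j : ℤ) (t + (j : ℤ)) ⊓ Y C ((k : ℤ) - (j : ℤ)) (t + (j : ℤ)) :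
              Subgroup ↥(Branch C (t + (j : ℤ)))) : Set ↥(Branch C (t + (j : ℤ))))) ∧
    (∀ j : ℕ, k < j →
      FSet C t (t + (j : ℤ)) (Del C (k : ℤ) t : Set ↥(Branch C t)) =
        (X C ((j : ℤ) - 1) (t + (j : ℤ)) : Set ↥(Branch C (t + (j : ℤ))))) := by
  refine ⟨fun j hjk => ?_, fun j hkj => ?_⟩
  · rw [FSet_Del, Qb_eq_X_sup_X_inf_Y C (by omega) (by omega), Subgroup.normal_mul]
  · rw [FSet_Del, Qb_eq_X C (by omega) (by omega)]

end GroupSystemPaper
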